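/- Let Ω be a finite probability space, let A : Ω → 𝒜 be a random variable on a finite nonempty index set 𝒜, let (X_a)_{a ∈ 𝒜} be a family of random variables X_a : Ω → 𝒳 on a common finite nonempty set 𝒳, and let Y : Ω → 𝒴 be a random variable with 𝒴 finite and nonempty. Define the random variable X_A : Ω → 𝒳 by X_A(ω) = X_{A(ω)}(ω). If there is a real number H such that H̃∞(X_a | Y) = H for every a ∈ 𝒜, then H̃∞(X_A | Y) ≥ H − log₂|𝒜|. -/

import Mathlib

open Finset Real

/-- Probability of an event `E` under the weight function `p` on a finite sample space. -/
noncomputable def pr {Ω : Type*} [Fintype Ω] (p : Ω → ℝ) (E : Set Ω) : ℝ :=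
  ∑ ω, E.indicator p ω

/-- `P[X = x]`. -/
noncomputable def prEq {Ω 𝒳 : Type*} [Fintype Ω] (p : Ω → ℝ) (X : Ω → 𝒳) (x : 𝒳) : ℝ :=
  pr p {ω | X ω = x}

/-- `P[X = x | Y = y]`, taken to be `0` when `P[Y = y] = 0`. -/
noncomputable def condProb {Ω 𝒳 𝒴 : Type*} [Fintype Ω]
    (p : Ω → ℝ) (X : Ω → 𝒳) (x : 𝒳) (Y : Ω → 𝒴) (y : 𝒴) : ℝ :=
  if prEq p Y y = 0 then 0 else pr p {ω | X ω = x ∧ Y ω = y} / prEq p Y y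

/-- Average min-entropy `H̃∞(X | Y)`. -/
noncomputable def avgMinEntropy {Ω 𝒳 𝒴 : Type*} [Fintype Ω]
    [Fintype 𝒳] [Nonempty 𝒳] [Fintype 𝒴]
    (p : Ω → ℝ) (X : Ω → 𝒳) (Y : Ω → 𝒴) : ℝ :=
  - Real.logb 2 (∑ y : 𝒴, prEq p Y y *
      (Finset.univ.sup' Finset.univ_nonempty fun x : 𝒳 => condProb p X x Y y))

/-- Min-entropy `H∞(X)`. -/
noncomputable def minEntropy {Ω 𝒳 : Type*} [Fintype Ω] [Fintype 𝒳] [Nonempty 𝒳]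
    (p : Ω → ℝ) (X : Ω → 𝒳) : ℝ :=
  - Real.logb 2 (Finset.univ.sup' Finset.univ_nonempty fun x : 𝒳 => prEq p X x)

noncomputable def guessProb {Ω 𝒳 𝒴 : Type*} [Fintype Ω]
    [Fintype 𝒳] [Nonempty 𝒳] [Fintype 𝒴]
    (p : Ω → ℝ) (X : Ω → 𝒳) (Y : Ω → 𝒴) : ℝ :=
  ∑ y : 𝒴, prEq p Y y *
      (Finset.univ.sup' Finset.univ_nonempty fun x : 𝒳 => condProb p X x Y y)

theorem pr_nonneg' {Ω : Type*} [Fintype Ω] (p : Ω → ℝ) (hp : ∀ ω, 0 ≤ p ω) (E : Set Ω) :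
    0 ≤ pr p E :=
  Finset.sum_nonneg fun ω _ => Set.indicator_nonneg (fun ω _ => hp ω) ω

theorem pr_pos' {Ω : Type*} [Fintype Ω] (p : Ω → ℝ) (hp : ∀ ω, 0 ≤ p ω) (E : Set Ω)
    (ω : Ω) (hω : ω ∈ E) (h : 0 < p ω) : 0 < pr p E := by
  refine Finset.sum_pos' (fun ω _ => Set.indicator_nonneg (fun ω _ => hp ω) ω) ⟨ω, mem_univ _, ?_⟩
  rwa [Set.indicator_of_mem hω]

theorem condProb_nonneg' {Ω 𝒳 𝒴 : Type*} [Fintype Ω] (p : Ω → ℝ) (hp : ∀ ω, 0 ≤ p ω)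
    (X : Ω → 𝒳) (x : 𝒳) (Y : Ω → 𝒴) (y : 𝒴) : 0 ≤ condProb p X x Y y := by
  unfold condProb
  split_ifs
  · exact le_rfl
  · exact div_nonneg (pr_nonneg' p hp _) (pr_nonneg' p hp _)

theorem sup_nonneg' {Ω 𝒳 𝒴 : Type*} [Fintype Ω] [Fintype 𝒳] [Nonempty 𝒳]
    (p : Ω → ℝ) (hp : ∀ ω, 0 ≤ p ω) (X : Ω → 𝒳) (Y : Ω → 𝒴) (y : 𝒴) :
    0 ≤ Finset.univ.sup' Finset.univ_nonempty fun x : 𝒳 => condProb p X x Y y := by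
  obtain ⟨x⟩ := ‹Nonempty 𝒳›
  exact (condProb_nonneg' p hp X x Y y).trans
    (Finset.le_sup' (fun x : 𝒳 => condProb p X x Y y) (mem_univ x))

theorem guessProb_pos {Ω 𝒳 𝒴 : Type*} [Fintype Ω] [Fintype 𝒳] [Nonempty 𝒳] [Fintype 𝒴]
    (p : Ω → ℝ) (hp : ∀ ω, 0 ≤ p ω) (hsum : ∑ ω, p ω = 1) (X : Ω → 𝒳) (Y : Ω → 𝒴) :
    0 < guessProb p X Y := by
  obtain ⟨ω, -, hω⟩ : ∃ ω ∈ (univ : Finset Ω), 0 < p ω := by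
    by_contra! h
    have := Finset.sum_nonpos h
    linarith
  have h1 : 0 < prEq p Y (Y ω) := pr_pos' p hp _ ω rfl hω
  have h2 : 0 < condProb p X (X ω) Y (Y ω) := by
    unfold condProb
    rw [if_neg h1.ne']
    exact div_pos (pr_pos' p hp _ ω ⟨rfl, rfl⟩ hω) h1
  refine Finset.sum_pos' (fun y _ => mul_nonneg (pr_nonneg' p hp _) (sup_nonneg' p hp X Y y))
    ⟨Y ω, mem_univ _, mul_pos h1 (h2.trans_le
      (Finset.le_sup' (fun x : 𝒳 => condProb p X x Y (Y ω)) (mem_univ (X ω))))⟩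

theorem condProb_le_sum {Ω 𝒜 𝒳 𝒴 : Type*} [Fintype Ω] [Fintype 𝒜]
    (p : Ω → ℝ) (hp : ∀ ω, 0 ≤ p ω) (A : Ω → 𝒜) (X : 𝒜 → Ω → 𝒳) (Y : Ω → 𝒴) (x : 𝒳) (y : 𝒴) :
    condProb p (fun ω => X (A ω) ω) x Y y ≤ ∑ a, condProb p (X a) x Y y := by
  unfold condProb
  split_ifs with h
  · simp
  · rw [← Finset.sum_div]
    refine div_le_div_of_nonneg_right ?_ (pr_nonneg' p hp _)
    unfold pr
    rw [Finset.sum_comm]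
    refine Finset.sum_le_sum fun ω _ => ?_
    have h1 := Finset.single_le_sum (f := fun a => Set.indicator {ω | X a ω = x ∧ Y ω = y} p ω)
      (fun a _ => Set.indicator_nonneg (fun ω _ => hp ω) ω) (mem_univ (A ω))
    refine le_trans (le_of_eq ?_) h1
    by_cases hm : X (A ω) ω = x ∧ Y ω = y
    · rw [Set.indicator_of_mem (by exact hm), Set.indicator_of_mem (by exact hm)]
    · rw [Set.indicator_of_notMem (by exact hm), Set.indicator_of_notMem (by exact hm)]

theorem guessProb_le_sum {Ω 𝒜 𝒳 𝒴 : Type*} [Fintype Ω] [Fintype 𝒜] [Fintype 𝒳] [Nonempty 𝒳]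
    [Fintype 𝒴] (p : Ω → ℝ) (hp : ∀ ω, 0 ≤ p ω) (A : Ω → 𝒜) (X : 𝒜 → Ω → 𝒳) (Y : Ω → 𝒴) :
    guessProb p (fun ω => X (A ω) ω) Y ≤ ∑ a, guessProb p (X a) Y := by
  unfold guessProb
  rw [Finset.sum_comm]
  refine Finset.sum_le_sum fun y _ => ?_
  rw [← Finset.mul_sum]
  refine mul_le_mul_of_nonneg_left ?_ (pr_nonneg' p hp _)
  refine Finset.sup'_le _ _ fun x _ => (condProb_le_sum p hp A X Y x y).trans ?_
  exact Finset.sum_le_sum fun a _ =>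
    Finset.le_sup' (fun x : 𝒳 => condProb p (X a) x Y y) (mem_univ x)

theorem stmt_3 {Ω 𝒜 𝒳 𝒴 : Type*} [Fintype Ω]
    [Fintype 𝒜] [Nonempty 𝒜] [Fintype 𝒳] [Nonempty 𝒳] [Fintype 𝒴] [Nonempty 𝒴]
    (p : Ω → ℝ) (hp : ∀ ω, 0 ≤ p ω) (hsum : ∑ ω, p ω = 1)
    (A : Ω → 𝒜) (X : 𝒜 → Ω → 𝒳) (Y : Ω → 𝒴) (H : ℝ)
    (hH : ∀ a : 𝒜, avgMinEntropy p (X a) Y = H) :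
    avgMinEntropy p (fun ω => X (A ω) ω) Y ≥ H - Real.logb 2 (Fintype.card 𝒜) := by
  have hg : ∀ a, guessProb p (X a) Y = (2 : ℝ) ^ (-H) := by
    intro a
    have h : - Real.logb 2 (guessProb p (X a) Y) = H := hH a
    rw [← h, neg_neg, Real.rpow_logb (by norm_num) (by norm_num) (guessProb_pos p hp hsum _ _)]
  have hle := guessProb_le_sum p hp A X Y
  have hpos := guessProb_pos p hp hsum (fun ω => X (A ω) ω) Y
  simp only [hg, Finset.sum_const, card_univ, nsmul_eq_mul] at hle
  have h2 := Real.logb_le_logb_of_le (b := 2) (by norm_num) hpos hle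
  have hc : (Fintype.card 𝒜 : ℝ) ≠ 0 := by
    exact_mod_cast Fintype.card_ne_zero
  rw [Real.logb_mul hc (Real.rpow_pos_of_pos (by norm_num) _).ne',
    Real.logb_rpow (by norm_num) (by norm_num)] at h2
  change - Real.logb 2 (guessProb p (fun ω => X (A ω) ω) Y) ≥ _
  linarith
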